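/- Consider the approximation of real numbers by the elements of the orbit PSL₂(ℤ)·φ of the Golden Ratio φ, with height function H. Then the Hurwitz constant, namely the supremum of the approximation constants c(y) over all y ∈ ℝ ∖ (ℚ ∪ PSL₂(ℤ)·φ), is equal to 3/√5 − 1. -/

import Mathlib

open scoped Classical

/-- `α` is a real quadratic irrational: an irrational real number which is the root of a
quadratic polynomial with rational coefficients. -/
def IsQuadIrr (α : ℝ) : Prop :=
  Irrational α ∧ ∃ a b c : ℚ, a ≠ 0 ∧ (a : ℝ) * α ^ 2 + (b : ℝ) * α + (c : ℝ) = 0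

/-- `σ` is the Galois conjugate of the real quadratic irrational `α`: the other root of
its minimal (quadratic) polynomial over `ℚ`. -/
def IsGalConj (α σ : ℝ) : Prop :=
  Irrational α ∧ σ ≠ α ∧
    ∃ a b c : ℚ, a ≠ 0 ∧ (a : ℝ) * α ^ 2 + (b : ℝ) * α + (c : ℝ) = 0 ∧
      (a : ℝ) * σ ^ 2 + (b : ℝ) * σ + (c : ℝ) = 0

/-- The Galois conjugate `α^σ` of a real quadratic irrational `α` (junk value `0` if `α`
is not a real quadratic irrational). -/
noncomputable def galConj (α : ℝ) : ℝ :=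
  if h : ∃ σ, IsGalConj α σ then h.choose else 0

/-- The height `H(α) = 2/|α − α^σ|` of a real quadratic irrational `α`. -/
noncomputable def qiHeight (α : ℝ) : ℝ := 2 / |α - galConj α|

/-- The action of `SL₂(ℤ)` (inducing the action of `PSL₂(ℤ)`) on real numbers by
homographies: the matrix `(a b; c d)` sends `x` to `(a·x+b)/(c·x+d)`. -/
noncomputable def mob (A : Matrix.SpecialLinearGroup (Fin 2) ℤ) (x : ℝ) : ℝ :=
  ((A.1 0 0 : ℝ) * x + (A.1 0 1 : ℝ)) / ((A.1 1 0 : ℝ) * x + (A.1 1 1 : ℝ))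

/-- The orbit `PSL₂(ℤ)·α₀` of a real number under the homography action. -/
def mobOrbit (α₀ : ℝ) : Set ℝ := {α | ∃ A, mob A α₀ = α}

/-- The Golden Ratio `φ = (1+√5)/2`. -/
noncomputable def goldenRat : ℝ := (1 + Real.sqrt 5) / 2

/-- The approximation constant `c(y)` of `y` by the elements of `Z` (with the height
function `H = qiHeight`): the liminf of `H(α)·|y − α|` as `α` ranges over `Z` along the
Fréchet filter, i.e. the sup over finite subsets `F` of the inf over `α ∈ Z ∖ F` of
`H(α)·|y − α|`. -/
noncomputable def approxConst (Z : Set ℝ) (y : ℝ) : ℝ :=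
  ⨆ F : Finset ℝ, ⨅ α : {α : ℝ // α ∈ Z ∧ α ∉ F}, qiHeight α.1 * |y - α.1|

/-- The Lagrange spectrum for the approximation of the elements of
`ℝ ∖ (ℚ ∪ Z)` by the elements of `Z`. -/
noncomputable def lagrangeSpectrum (Z : Set ℝ) : Set ℝ :=
  approxConst Z '' {y : ℝ | Irrational y ∧ y ∉ Z}

/-!
Homographies preserve cross-ratios, so `H(α)·|y - α|` for `α = A·β` equals
`2·|x - β|·|z - β'| / (|β - β'|·|x - z|)` with `y = A·x` and `z` the pole of `A`. For the upper
bound, Dirichlet's theorem supplies infinitely many `A` with `|x - z| > 1`, and then some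
integral translate of `{φ, ψ}`, taken in one of its two orders, makes this quantity at most
`2ψ²/√5 = 3/√5 - 1`.

For the lower bound, take for `y` the metallic mean `[N; N, N, …]`. If `α` is a root of `f`, an
integral form of discriminant `5`, then `H(α)·|y - α| ≥ ||f'(y)| - √5| / √5`, and for all but
finitely many `α` the number `|f'(y)|` is either large or close to `|m|/N`, with `m` the pairing of
`f` with `X² - N XY - Y²`. Reduction theory shows that `|m|` avoids the interval `(N + 4, 3N)`, so
`|f'(y)|` is at most about `1` or at least about `3`, and the bound follows by letting `N → ∞`.
-/

open Filter Topology
open scoped goldenRatio MatrixGroups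

lemma goldenRat_eq_goldenRatio : goldenRat = φ := rfl

section GaloisConjugate

lemma eq_zero_of_irrational_of_mul_add_eq_zero {x : ℝ} (hx : Irrational x) {r s : ℚ}
    (h : (r : ℝ) * x + s = 0) : r = 0 ∧ s = 0 := by
  have hr : r = 0 := by
    by_contra hr
    have hr' : (r : ℝ) ≠ 0 := by exact_mod_cast hr
    refine hx ⟨-s / r, ?_⟩
    push_cast
    rw [div_eq_iff hr']
    linear_combination -h
  subst hr
  exact ⟨rfl, by simpa using h⟩

lemma IsGalConj.unique {α σ τ : ℝ} (hσ : IsGalConj α σ) (hτ : IsGalConj α τ) : σ = τ := by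
  obtain ⟨hα, hσα, a, b, c, ha, hfα, hfσ⟩ := hσ
  obtain ⟨-, hτα, a', b', c', ha', hgα, hgτ⟩ := hτ
  have hfsum : (a : ℝ) * (σ + α) + b = 0 := by
    apply mul_left_cancel₀ (sub_ne_zero.2 hσα)
    linear_combination hfσ - hfα
  have hgsum : (a' : ℝ) * (τ + α) + b' = 0 := by
    apply mul_left_cancel₀ (sub_ne_zero.2 hτα)
    linear_combination hgτ - hgα
  have hprop : a' * b - a * b' = 0 := by
    refine (eq_zero_of_irrational_of_mul_add_eq_zero hα (s := a' * c - a * c') ?_).1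
    push_cast
    linear_combination (a' : ℝ) * hfα - (a : ℝ) * hgα
  have hprop' : (a' : ℝ) * b - a * b' = 0 := by exact_mod_cast hprop
  have haa' : (a : ℝ) * a' ≠ 0 := by exact_mod_cast mul_ne_zero ha ha'
  apply mul_left_cancel₀ haa'
  linear_combination (a' : ℝ) * hfsum - (a : ℝ) * hgsum - hprop'

lemma IsGalConj.galConj_eq {α σ : ℝ} (h : IsGalConj α σ) : galConj α = σ := by
  have hex : ∃ σ, IsGalConj α σ := ⟨σ, h⟩
  rw [galConj, dif_pos hex]
  exact hex.choose_spec.unique h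

lemma qiHeight_nonneg (α : ℝ) : 0 ≤ qiHeight α := by
  unfold qiHeight
  positivity

end GaloisConjugate

/-- `α` and `σ` are the two roots of the integral polynomial `a X² + b X + c`, expressed by
Vieta's formulas so that the pair of roots can be transformed along with the coefficients.
The degenerate case `a = 0` is only excluded by a nonsquare discriminant. -/
structure IsRootPair (a b c : ℤ) (α σ : ℝ) : Prop where
  add : (a : ℝ) * (α + σ) = -b
  mul : (a : ℝ) * (α * σ) = c

namespace IsRootPair

variable {a b c : ℤ} {α σ : ℝ}

lemma symm (h : IsRootPair a b c α σ) : IsRootPair a b c σ α :=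
  ⟨by rw [add_comm, h.add], by rw [mul_comm σ, h.mul]⟩

lemma eval_eq_zero (h : IsRootPair a b c α σ) : (a : ℝ) * α ^ 2 + b * α + c = 0 := by
  linear_combination α * h.add - h.mul

lemma sq_mul_sub (h : IsRootPair a b c α σ) : (a * (α - σ)) ^ 2 = (discrim a b c : ℤ) := by
  unfold discrim
  push_cast
  linear_combination (a * (α + σ) - b : ℝ) * h.add - 4 * (a : ℝ) * h.mul

lemma abs_mul_abs_sub (h : IsRootPair a b c α σ) :
    |(a : ℝ)| * |α - σ| = √(discrim a b c : ℤ) := by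
  rw [← h.sq_mul_sub, Real.sqrt_sq_eq_abs, abs_mul]

lemma irrational (h : IsRootPair a b c α σ) (hD : ¬IsSquare (discrim a b c)) :
    Irrational α := by
  rintro ⟨r, rfl⟩
  refine hD (Rat.isSquare_intCast_iff.1 ⟨2 * a * r + b, ?_⟩)
  have hsq := h.sq_mul_sub
  have hsub : (a : ℝ) * (r - σ) = 2 * a * r + b := by linear_combination -h.add
  rw [hsub, sq] at hsq
  exact_mod_cast hsq.symm

lemma mul_sub_ne_zero (h : IsRootPair a b c α σ) (hD : ¬IsSquare (discrim a b c)) :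
    (a : ℝ) * (α - σ) ≠ 0 := by
  intro h0
  have hsq := h.sq_mul_sub
  rw [h0, zero_pow two_ne_zero, eq_comm, Int.cast_eq_zero] at hsq
  exact hD (hsq ▸ IsSquare.zero)

lemma leadingCoeff_ne_zero (h : IsRootPair a b c α σ) (hD : ¬IsSquare (discrim a b c)) :
    (a : ℝ) ≠ 0 :=
  left_ne_zero_of_mul (h.mul_sub_ne_zero hD)

lemma isGalConj (h : IsRootPair a b c α σ) (hD : ¬IsSquare (discrim a b c)) :
    IsGalConj α σ :=
  ⟨h.irrational hD, (sub_ne_zero.1 (right_ne_zero_of_mul (h.mul_sub_ne_zero hD))).symm, a, b, c,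
    by exact_mod_cast h.leadingCoeff_ne_zero hD, by exact_mod_cast h.eval_eq_zero,
    by exact_mod_cast h.symm.eval_eq_zero⟩

lemma qiHeight_eq (h : IsRootPair a b c α σ) (hD : ¬IsSquare (discrim a b c)) :
    qiHeight α = 2 / |α - σ| := by
  rw [qiHeight, (h.isGalConj hD).galConj_eq]

lemma sq_mul_discrim_eq (h : IsRootPair a b c α σ) (hD : ¬IsSquare (discrim a b c))
    {a' b' c' : ℤ} {σ' : ℝ} (h' : IsRootPair a' b' c' α σ')
    (hD' : ¬IsSquare (discrim a' b' c')) : a' ^ 2 * discrim a b c = a ^ 2 * discrim a' b' c' := by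
  obtain rfl : σ = σ' := (h.isGalConj hD).unique (h'.isGalConj hD')
  have hreal : (a' : ℝ) ^ 2 * (discrim a b c : ℤ) = (a : ℝ) ^ 2 * (discrim a' b' c' : ℤ) := by
    rw [← h.sq_mul_sub, ← h'.sq_mul_sub]
    ring
  exact_mod_cast hreal

end IsRootPair

section Homography

/-- The denominator `c·x + d` of the homography `x ↦ (a·x + b)/(c·x + d)`, i.e. its automorphy
factor. -/
noncomputable def mobDenom (A : SL(2, ℤ)) (x : ℝ) : ℝ := A 1 0 * x + A 1 1

variable {A B : SL(2, ℤ)} {x y : ℝ}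

lemma mob_eq_div (A : SL(2, ℤ)) (x : ℝ) : mob A x = (A 0 0 * x + A 0 1) / mobDenom A x := rfl

lemma det_cast_eq_one (A : SL(2, ℤ)) : (A 0 0 : ℝ) * A 1 1 - A 0 1 * A 1 0 = 1 := by
  exact_mod_cast (Matrix.det_fin_two A.1).symm.trans A.2

lemma mobDenom_ne_zero (A : SL(2, ℤ)) (hx : Irrational x) : mobDenom A x ≠ 0 := by
  intro h0
  obtain ⟨hc, hd⟩ := eq_zero_of_irrational_of_mul_add_eq_zero hx (r := A 1 0) (s := A 1 1)
    (by exact_mod_cast h0)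
  have hdet := det_cast_eq_one A
  rw [show A 1 0 = 0 by exact_mod_cast hc, show A 1 1 = 0 by exact_mod_cast hd] at hdet
  norm_num at hdet

lemma mobDenom_mul (hB : mobDenom B x ≠ 0) :
    mobDenom (A * B) x = mobDenom A (mob B x) * mobDenom B x := by
  rw [mobDenom, mobDenom, add_mul, mul_assoc, mob_eq_div, div_mul_cancel₀ _ hB, mobDenom]
  simp only [Matrix.SpecialLinearGroup.coe_mul, Matrix.mul_apply, Fin.sum_univ_two]
  push_cast
  ring

lemma mob_mul (hB : mobDenom B x ≠ 0) : mob (A * B) x = mob A (mob B x) := by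
  have hnum : ((A * B) 0 0 * x + (A * B) 0 1 : ℝ) =
      (A 0 0 * mob B x + A 0 1) * mobDenom B x := by
    rw [add_mul, mul_assoc, mob_eq_div, div_mul_cancel₀ _ hB, mobDenom]
    simp only [Matrix.SpecialLinearGroup.coe_mul, Matrix.mul_apply, Fin.sum_univ_two]
    push_cast
    ring
  rw [mob_eq_div, hnum, mobDenom_mul hB, mul_div_mul_right _ _ hB, ← mob_eq_div]

lemma mob_one (x : ℝ) : mob 1 x = x := by simp [mob]

lemma mobDenom_one (x : ℝ) : mobDenom 1 x = 1 := by simp [mobDenom]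

lemma mobDenom_inv (A : SL(2, ℤ)) (x : ℝ) : mobDenom A⁻¹ x = A 0 0 - A 1 0 * x := by
  rw [Matrix.SpecialLinearGroup.SL2_inv_expl]
  simp only [mobDenom, Matrix.cons_val_zero, Matrix.cons_val_one, Int.cast_neg]
  ring

lemma mob_mob_inv (A : SL(2, ℤ)) (hy : Irrational y) : mob A (mob A⁻¹ y) = y := by
  rw [← mob_mul (mobDenom_ne_zero _ hy), mul_inv_cancel, mob_one]

lemma mobDenom_mob_inv (A : SL(2, ℤ)) (hy : Irrational y) :
    mobDenom A (mob A⁻¹ y) = (A 0 0 - A 1 0 * y)⁻¹ := by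
  rw [← mobDenom_inv]
  apply eq_inv_of_mul_eq_one_left
  rw [← mobDenom_mul (mobDenom_ne_zero _ hy), mul_inv_cancel, mobDenom_one]

lemma mob_sub_mob (hx : mobDenom A x ≠ 0) (hy : mobDenom A y ≠ 0) :
    mob A x - mob A y = (x - y) / (mobDenom A x * mobDenom A y) := by
  rw [mob_eq_div, mob_eq_div, div_sub_div _ _ hx hy]
  congr 1
  unfold mobDenom
  linear_combination (x - y) * det_cast_eq_one A

lemma mob_mem_mobOrbit (A : SL(2, ℤ)) {α₀ α : ℝ} (hα₀ : Irrational α₀) (hα : α ∈ mobOrbit α₀) :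
    mob A α ∈ mobOrbit α₀ := by
  obtain ⟨B, rfl⟩ := hα
  exact ⟨A * B, mob_mul (mobDenom_ne_zero _ hα₀)⟩

lemma IsRootPair.exists_mob {a b c : ℤ} {α σ : ℝ} (h : IsRootPair a b c α σ)
    (A : SL(2, ℤ)) (hα : mobDenom A α ≠ 0) (hσ : mobDenom A σ ≠ 0) :
    ∃ a' b' c' : ℤ, discrim a' b' c' = discrim a b c ∧
      IsRootPair a' b' c' (mob A α) (mob A σ) := by
  have hdet : A 0 0 * A 1 1 - A 0 1 * A 1 0 = 1 := by exact_mod_cast det_cast_eq_one A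
  have hlead : ((a * A 1 1 ^ 2 - b * (A 1 0 * A 1 1) + c * A 1 0 ^ 2 : ℤ) : ℝ) =
      a * (mobDenom A α * mobDenom A σ) := by
    unfold mobDenom
    push_cast
    linear_combination -(A 1 0 * A 1 1 : ℝ) * h.add - (A 1 0 : ℝ) ^ 2 * h.mul
  -- The coefficients are those of the binary form `a X² + b XY + c Y²` composed with `A⁻¹`.
  refine ⟨a * A 1 1 ^ 2 - b * (A 1 0 * A 1 1) + c * A 1 0 ^ 2,
    -(2 * a * (A 0 1 * A 1 1)) + b * (A 0 0 * A 1 1 + A 0 1 * A 1 0) - 2 * c * (A 0 0 * A 1 0),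
    a * A 0 1 ^ 2 - b * (A 0 0 * A 0 1) + c * A 0 0 ^ 2, ?_, ?_, ?_⟩
  · unfold discrim
    linear_combination (b ^ 2 - 4 * a * c) * (A 0 0 * A 1 1 - A 0 1 * A 1 0 + 1) * hdet
  · rw [hlead, mob_eq_div, mob_eq_div, div_add_div _ _ hα hσ, mul_assoc,
      mul_div_cancel₀ _ (mul_ne_zero hα hσ)]
    unfold mobDenom
    push_cast
    linear_combination (A 0 0 * A 1 1 + A 0 1 * A 1 0 : ℝ) * h.add
      + 2 * (A 0 0 * A 1 0 : ℝ) * h.mul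
  · rw [hlead, mob_eq_div, mob_eq_div, div_mul_div_comm, mul_assoc,
      mul_div_cancel₀ _ (mul_ne_zero hα hσ)]
    push_cast
    linear_combination (A 0 0 * A 0 1 : ℝ) * h.add + (A 0 0 : ℝ) ^ 2 * h.mul

/-- Since homographies preserve cross-ratios, the approximation quality of `mob A β` to `mob A x`
can be computed before applying `A`. -/
lemma IsRootPair.qiHeight_mob_mul_abs_sub {a b c : ℤ} {β τ : ℝ} (h : IsRootPair a b c β τ)
    (hD : ¬IsSquare (discrim a b c)) (A : SL(2, ℤ)) (hx : mobDenom A x ≠ 0) :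
    qiHeight (mob A β) * |mob A x - mob A β| =
      2 * (|x - β| * |mobDenom A τ|) / (|β - τ| * |mobDenom A x|) := by
  have hβ := mobDenom_ne_zero A (h.irrational hD)
  have hτ := mobDenom_ne_zero A (h.symm.irrational hD)
  obtain ⟨a', b', c', hD', h'⟩ := h.exists_mob A hβ hτ
  have hβτ : |β - τ| ≠ 0 := abs_ne_zero.2 (right_ne_zero_of_mul (h.mul_sub_ne_zero hD))
  rw [h'.qiHeight_eq (hD' ▸ hD), mob_sub_mob hβ hτ, mob_sub_mob hx hβ]
  simp only [abs_div, abs_mul]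
  have hβ' := abs_ne_zero.2 hβ
  have hτ' := abs_ne_zero.2 hτ
  have hx' := abs_ne_zero.2 hx
  field_simp

end Homography

section GoldenPairs

/-- `β` and `β'` are the images of `φ` and its Galois conjugate `ψ`, in either order, under the
same integral translation. -/
inductive IsGoldenPair : ℝ → ℝ → Prop
  | ratio_conj (k : ℤ) : IsGoldenPair (φ + k) (ψ + k)
  | conj_ratio (k : ℤ) : IsGoldenPair (ψ + k) (φ + k)

variable {β β' : ℝ}

lemma not_isSquare_five : ¬IsSquare (5 : ℤ) := by norm_num

lemma discrim_goldenPair (k : ℤ) : discrim 1 (-(2 * k + 1)) (k ^ 2 + k - 1) = 5 := by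
  unfold discrim
  ring

lemma isRootPair_goldenRatio (k : ℤ) :
    IsRootPair 1 (-(2 * k + 1)) (k ^ 2 + k - 1) (φ + k) (ψ + k) where
  add := by
    push_cast
    linear_combination Real.goldenRatio_add_goldenConj
  mul := by
    push_cast
    linear_combination Real.goldenRatio_mul_goldenConj + k * Real.goldenRatio_add_goldenConj

namespace IsGoldenPair

lemma exists_isRootPair (h : IsGoldenPair β β') :
    ∃ b c, discrim 1 b c = 5 ∧ IsRootPair 1 b c β β' := by
  cases h with
  | ratio_conj k => exact ⟨_, _, discrim_goldenPair k, isRootPair_goldenRatio k⟩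
  | conj_ratio k => exact ⟨_, _, discrim_goldenPair k, (isRootPair_goldenRatio k).symm⟩

lemma mem_mobOrbit (h : IsGoldenPair β β') : β ∈ mobOrbit goldenRat := by
  rw [goldenRat_eq_goldenRatio]
  cases h with
  | ratio_conj k => exact ⟨⟨!![1, k; 0, 1], by simp⟩, by simp [mob]⟩
  | conj_ratio k =>
    refine ⟨⟨!![k, -1; 1, 0], by simp⟩, ?_⟩
    simp only [mob, Matrix.of_apply, Matrix.cons_val', Matrix.cons_val_zero, Matrix.cons_val_one,
      Matrix.cons_val_fin_one, Int.cast_neg, Int.cast_one, Int.cast_zero,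
      one_mul, add_zero]
    rw [div_eq_iff Real.goldenRatio_ne_zero]
    linear_combination -Real.goldenRatio_mul_goldenConj

lemma neg (h : IsGoldenPair β β') : IsGoldenPair (-β) (-β') := by
  have hsum := Real.goldenRatio_add_goldenConj
  cases h with
  | ratio_conj k =>
    convert conj_ratio (-k - 1) using 1 <;> push_cast <;> linear_combination -hsum
  | conj_ratio k =>
    convert ratio_conj (-k - 1) using 1 <;> push_cast <;> linear_combination -hsum

lemma add_intCast (h : IsGoldenPair β β') (m : ℤ) : IsGoldenPair (β + m) (β' + m) := by
  cases h with
  | ratio_conj k => simpa [add_assoc] using ratio_conj (k + m)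
  | conj_ratio k => simpa [add_assoc] using conj_ratio (k + m)

end IsGoldenPair

lemma goldenConj_gt : -5 / 8 < ψ := by
  have : √5 < 9 / 4 := by rw [Real.sqrt_lt' (by norm_num)]; norm_num
  unfold Real.goldenConj
  linarith

lemma abs_sub_goldenRatio_mul_abs_le {s r : ℝ} (hr : 0 ≤ r) (hr1 : r ≤ 1) (hrs : r ≤ s)
    (h : 1 ≤ s + r) (hsr : s ≤ 3 ∨ 1 / 3 ≤ r) : |s - φ| * |-r - ψ| ≤ ψ ^ 2 * (s + r) := by
  have hψ := goldenConj_gt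
  have hφ : φ = 1 - ψ := by linarith [Real.goldenRatio_add_goldenConj]
  have hprod : (s - φ) * (-r - ψ) = -(s * r + s * ψ - (1 - ψ) * r + 1) := by
    rw [hφ]
    linear_combination -Real.goldenConj_sq
  have hupper : 1 ≤ s * (1 - r) + 2 * r := by
    nlinarith [mul_nonneg (sub_nonneg.2 h) (sub_nonneg.2 hr1)]
  -- Since `ψ > -5/8`, the other bound follows from `0 ≤ s r - s / 4 - 5 r / 4 + 1`, factored here.
  have hlower : -(11 / 16) ≤ (s - 5 / 4) * (r - 1 / 4) := by
    rcases hsr with hs | hr3 <;> rcases le_total s (5 / 4) with hs' | hs' <;> nlinarith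
  rw [← abs_mul, hprod, abs_neg, Real.goldenConj_sq, abs_le]
  constructor
  · nlinarith
  · linarith

lemma abs_sub_goldenRatio_sq_mul_abs_le {s r : ℝ} (hs : 3 ≤ s) (hr : 0 ≤ r) (hsr : s * r ≤ 1) :
    |s - (φ + 1)| * |-r - (ψ + 1)| ≤ ψ ^ 2 * (s + r) := by
  have hψ := goldenConj_gt
  have hφ : φ = 1 - ψ := by linarith [Real.goldenRatio_add_goldenConj]
  rw [hφ, abs_of_nonneg (by linarith), abs_of_nonpos (by linarith)]
  linear_combination hsr + 3 * hr + (1 - s - r) * Real.goldenConj_sq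

lemma abs_add_goldenRatio_sq_mul_abs_le {s r : ℝ} (hs : 3 ≤ s) (hr : 0 ≤ r) (hr3 : r ≤ 1 / 3)
    (hsr : 1 ≤ s * r) :
    |s - (ψ - 2)| * |-r - (φ - 2)| ≤ ψ ^ 2 * (s + r) := by
  have hψ := goldenConj_gt
  have hφ : φ = 1 - ψ := by linarith [Real.goldenRatio_add_goldenConj]
  rw [hφ, abs_of_nonneg (by linarith [Real.goldenConj_neg]), abs_of_nonneg (by linarith)]
  linear_combination hsr + 3 * hr + (-1 - s - r) * Real.goldenConj_sq

lemma exists_isGoldenPair_of_nonneg {s r : ℝ} (hr : 0 ≤ r) (hr1 : r ≤ 1)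
    (h : 1 ≤ s + r) : ∃ β β', IsGoldenPair β β' ∧ |s - β| * |-r - β'| ≤ ψ ^ 2 * (s + r) ∧
      1 / 2 ≤ |-r - β| := by
  have hφ := Real.one_lt_goldenRatio
  have hψ := goldenConj_gt
  have hψ0 := Real.goldenConj_neg
  have hpair₀ : IsGoldenPair φ ψ := by simpa using IsGoldenPair.ratio_conj 0
  have hpair₁ : IsGoldenPair (φ + 1) (ψ + 1) := by simpa using IsGoldenPair.ratio_conj 1
  have hpair₂ : IsGoldenPair (ψ - 2) (φ - 2) := by
    simpa [sub_eq_add_neg] using IsGoldenPair.conj_ratio (-2)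
  have hpair₃ : IsGoldenPair (-ψ) (-φ) := by simpa using (IsGoldenPair.conj_ratio 0).neg
  rcases le_or_gt r s with hrs | hsr
  · by_cases hcusp : s ≤ 3 ∨ 1 / 3 ≤ r
    · refine ⟨_, _, hpair₀, abs_sub_goldenRatio_mul_abs_le hr hr1 hrs h hcusp, ?_⟩
      exact le_abs.2 (.inr (by linarith))
    · obtain ⟨hs3, hr3⟩ := not_or.1 hcusp
      rcases le_total (s * r) 1 with hsr | hsr
      · refine ⟨_, _, hpair₁, ?_, le_abs.2 (.inr (by linarith))⟩
        exact abs_sub_goldenRatio_sq_mul_abs_le (not_le.1 hs3).le hr hsr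
      · refine ⟨_, _, hpair₂, ?_, le_abs.2 (.inl (by linarith))⟩
        exact abs_add_goldenRatio_sq_mul_abs_le (not_le.1 hs3).le hr (not_le.1 hr3).le hsr
  · refine ⟨_, _, hpair₃, ?_, le_abs.2 (.inr (by linarith))⟩
    have hswap := abs_sub_goldenRatio_mul_abs_le (by linarith) (hsr.le.trans hr1) hsr.le
      (by linarith) (.inl (by linarith))
    rwa [mul_comm, add_comm s, neg_sub_neg, abs_sub_comm, sub_neg_eq_add, ← abs_neg (s + ψ),
      neg_add']

/-- Here `z` will be the pole of a homography: keeping `β` away from `z` makes the images of `β` and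
of `x` under that homography close to each other. -/
lemma exists_isGoldenPair {x z : ℝ} (h : 1 ≤ |x - z|) :
    ∃ β β', IsGoldenPair β β' ∧ |x - β| * |z - β'| ≤ ψ ^ 2 * |x - z| ∧ 1 / 2 ≤ |z - β| := by
  wlog hzx : z ≤ x generalizing x z
  · obtain ⟨β, β', hβ, hle, hfar⟩ :=
      this (x := -x) (z := -z) (by rwa [neg_sub_neg, abs_sub_comm]) (by linarith)
    have hneg (u w : ℝ) : |u - -w| = |-u - w| := by rw [← abs_neg, neg_sub', neg_neg]
    refine ⟨_, _, hβ.neg, ?_, ?_⟩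
    · rwa [hneg, hneg, ← abs_neg (x - z), neg_sub']
    · rwa [hneg]
  rw [abs_of_nonneg (sub_nonneg.2 hzx)] at h ⊢
  have hceil := Int.le_ceil z
  have hceil' := Int.ceil_lt_add_one z
  obtain ⟨β, β', hβ, hle, hfar⟩ := exists_isGoldenPair_of_nonneg (s := x - ⌈z⌉) (r := ⌈z⌉ - z)
    (by linarith) (by linarith) (by linarith)
  have hshift (w : ℝ) : -(⌈z⌉ - z) - w = z - (w + ⌈z⌉) := by ring
  rw [sub_add_sub_cancel, hshift, sub_sub, add_comm _ β] at hle
  rw [hshift] at hfar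
  exact ⟨_, _, hβ.add_intCast ⌈z⌉, hle, hfar⟩

end GoldenPairs

section UpperBound

lemma exists_rat_lt_den_of_irrational {y : ℝ} (hy : Irrational y) (n : ℕ) :
    ∃ r : ℚ, n < r.den ∧ |y - r| < 1 / r.den ^ 2 := by
  obtain ⟨ε, hfar, hε⟩ :=
    ((hy.eventually_forall_le_dist_cast_rat_of_den_le n).filter_mono
      (nhdsWithin_le_nhds (s := Set.Ioi 0)) |>.and self_mem_nhdsWithin).exists
  obtain ⟨N, hN⟩ := exists_nat_one_div_lt hε
  obtain ⟨r, hr, hrN⟩ := Real.exists_rat_abs_sub_le_and_den_le y (Nat.succ_pos N)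
  have hden : (1 : ℝ) ≤ r.den := by exact_mod_cast r.pos
  have hrN' : (r.den : ℝ) ≤ N + 1 := by exact_mod_cast hrN
  push_cast at hr
  refine ⟨r, ?_, hr.trans_lt ?_⟩
  · by_contra! hle
    have hclose : |y - r| < ε := calc
      |y - r| ≤ 1 / ((N + 1 + 1) * r.den) := hr
      _ ≤ 1 / (N + 1) := one_div_le_one_div_of_le (by positivity) (by nlinarith)
      _ < ε := hN
    exact hclose.not_ge (hfar r hle)
  · exact one_div_lt_one_div_of_lt (by positivity) (by nlinarith)

lemma exists_mob_eq_of_irrational {y : ℝ} (hy : Irrational y) (n : ℕ) :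
    ∃ (A : SL(2, ℤ)) (x : ℝ), mob A x = y ∧ (n : ℝ) < A 1 0 ∧ (A 1 0 : ℝ) < |mobDenom A x| := by
  obtain ⟨r, hn, hr⟩ := exists_rat_lt_den_of_irrational hy n
  obtain ⟨A, hnum, hden⟩ := r.isCoprime_num_den.exists_SL2_col 0
  have hnum' : (A 0 0 : ℝ) = r * r.den := by rw [hnum]; exact_mod_cast (Rat.mul_den_eq_num r).symm
  have hden' : (A 1 0 : ℝ) = r.den := by rw [hden, Int.cast_natCast]
  have hpos : (0 : ℝ) < r.den := by exact_mod_cast r.pos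
  have hinv : |(A 0 0 : ℝ) - A 1 0 * y| = r.den * |y - r| := by
    rw [hnum', hden', mul_comm (r : ℝ), ← mul_sub, abs_mul, abs_of_pos hpos, abs_sub_comm]
  have hne : 0 < |y - r| := abs_pos.2 (sub_ne_zero.2 (hy.ne_rat r))
  refine ⟨A, mob A⁻¹ y, mob_mob_inv A hy, by rw [hden']; exact_mod_cast hn, ?_⟩
  rw [mobDenom_mob_inv A hy, abs_inv, hinv, hden', lt_inv_comm₀ hpos (by positivity)]
  calc r.den * |y - r| < r.den * (1 / r.den ^ 2) := by gcongr
    _ = (r.den : ℝ)⁻¹ := by field_simp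

lemma two_mul_goldenConj_sq_div_sqrt_five : 2 * ψ ^ 2 / √5 = 3 / √5 - 1 := by
  have h5 : √5 ≠ 0 := by positivity
  rw [Real.goldenConj_sq, Real.goldenConj]
  field_simp
  ring

lemma exists_mem_mobOrbit_qiHeight_le (A : SL(2, ℤ)) {x : ℝ} (hq : 0 < A 1 0)
    (hx : (A 1 0 : ℝ) < |mobDenom A x|) :
    ∃ α ∈ mobOrbit goldenRat, qiHeight α * |mob A x - α| ≤ 3 / √5 - 1 ∧
      |mob A x - α| ≤ 3 / (A 1 0 : ℝ) ^ 2 := by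
  have hq' : (0 : ℝ) < A 1 0 := by exact_mod_cast hq
  set z : ℝ := -(A 1 1 / A 1 0) with hz
  have hfactor (w : ℝ) : |mobDenom A w| = A 1 0 * |z - w| := by
    have : mobDenom A w = A 1 0 * (w - z) := by
      rw [mobDenom, hz]
      field_simp
      ring
    rw [this, abs_mul, abs_of_pos hq', abs_sub_comm]
  have hxz : 1 < |x - z| := by
    rw [hfactor, abs_sub_comm] at hx
    exact (lt_mul_iff_one_lt_right hq').1 hx
  obtain ⟨β, β', hβ, hle, hfar⟩ := exists_isGoldenPair hxz.le
  obtain ⟨b, c, hD, hroot⟩ := hβ.exists_isRootPair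
  have hD5 : ¬IsSquare (discrim 1 b c) := hD ▸ not_isSquare_five
  have hdist : |β - β'| = √5 := by simpa [hD] using hroot.abs_mul_abs_sub
  have hzβ : 0 < |z - β| := one_half_pos.trans_le hfar
  have hzx : 0 < |z - x| := by linarith [abs_sub_comm x z]
  have hx0 : mobDenom A x ≠ 0 := abs_pos.1 (hq'.trans hx)
  refine ⟨mob A β, mob_mem_mobOrbit A Real.goldenRatio_irrational hβ.mem_mobOrbit, ?_, ?_⟩
  · rw [hroot.qiHeight_mob_mul_abs_sub hD5 A hx0, hdist, hfactor, hfactor, abs_sub_comm z x,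
      ← two_mul_goldenConj_sq_div_sqrt_five]
    calc 2 * (|x - β| * (A 1 0 * |z - β'|)) / (√5 * (A 1 0 * |x - z|))
        = 2 * (|x - β| * |z - β'|) / (√5 * |x - z|) := by field_simp
      _ ≤ 2 * (ψ ^ 2 * |x - z|) / (√5 * |x - z|) := by gcongr
      _ = 2 * ψ ^ 2 / √5 := by field_simp
  · have htri : |x - β| ≤ 3 * (|z - x| * |z - β|) := by
      rw [abs_sub_comm] at hxz
      have := abs_sub_le x z β
      rw [abs_sub_comm x z] at this
      nlinarith
    rw [mob_sub_mob hx0 (mobDenom_ne_zero A (hroot.irrational hD5)), abs_div, abs_mul, hfactor,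
      hfactor, div_le_div_iff₀ (by positivity) (by positivity)]
    nlinarith [mul_le_mul_of_nonneg_right htri (sq_nonneg (A 1 0 : ℝ))]

lemma frequently_nhds_mobOrbit_goldenRat {y : ℝ} (hy : Irrational y) :
    ∃ᶠ α in 𝓝 y, α ∈ mobOrbit goldenRat ∧ qiHeight α * |y - α| ≤ 3 / √5 - 1 := by
  rw [Metric.nhds_basis_ball.frequently_iff]
  intro ε hε
  obtain ⟨n, hn⟩ := exists_nat_gt (3 / ε)
  obtain ⟨A, x, rfl, hnA, hAx⟩ := exists_mob_eq_of_irrational hy (n + 1)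
  push_cast at hnA
  have hA : (1 : ℝ) < A 1 0 := by linarith [(Nat.cast_nonneg n : (0 : ℝ) ≤ n)]
  obtain ⟨α, hα, hle, hclose⟩ :=
    exists_mem_mobOrbit_qiHeight_le A (by exact_mod_cast zero_lt_one.trans hA) hAx
  refine ⟨α, ?_, hα, hle⟩
  rw [Metric.mem_ball, Real.dist_eq, abs_sub_comm]
  refine hclose.trans_lt ?_
  rw [div_lt_iff₀ (by positivity)]
  rw [div_lt_iff₀ hε] at hn
  nlinarith

lemma frequently_cofinite_mobOrbit_goldenRat {y : ℝ} (hy : Irrational y)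
    (hyφ : y ∉ mobOrbit goldenRat) :
    ∃ᶠ α in cofinite, α ∈ mobOrbit goldenRat ∧ qiHeight α * |y - α| ≤ 3 / √5 - 1 := by
  refine Frequently.filter_mono ?_ (nhdsNE_le_cofinite (a := y))
  refine frequently_nhdsWithin_iff.2 ((frequently_nhds_mobOrbit_goldenRat hy).mono ?_)
  rintro α hα
  exact ⟨hα, fun h ↦ hyφ (h ▸ hα.1)⟩

end UpperBound

section ApproxConst

variable {Z : Set ℝ} {y K L : ℝ}

lemma bddBelow_qiHeight_mul_abs_sub (Z : Set ℝ) (y : ℝ) (F : Finset ℝ) :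
    BddBelow (Set.range fun α : {α : ℝ // α ∈ Z ∧ α ∉ F} ↦ qiHeight α.1 * |y - α.1|) :=
  ⟨0, Set.forall_mem_range.2 fun α ↦ mul_nonneg (qiHeight_nonneg α.1) (abs_nonneg _)⟩

lemma iInf_qiHeight_mul_abs_sub_le_of_frequently
    (h : ∃ᶠ α in cofinite, α ∈ Z ∧ qiHeight α * |y - α| ≤ K) (F : Finset ℝ) :
    ⨅ α : {α : ℝ // α ∈ Z ∧ α ∉ F}, qiHeight α.1 * |y - α.1| ≤ K := by
  obtain ⟨α, ⟨hα, hle⟩, hF⟩ := (h.and_eventually F.eventually_cofinite_notMem).exists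
  exact (ciInf_le (bddBelow_qiHeight_mul_abs_sub Z y F) ⟨α, hα, hF⟩).trans hle

lemma approxConst_le_of_frequently
    (h : ∃ᶠ α in cofinite, α ∈ Z ∧ qiHeight α * |y - α| ≤ K) : approxConst Z y ≤ K :=
  ciSup_le (iInf_qiHeight_mul_abs_sub_le_of_frequently h)

/-- The frequently occurring bound `K` rules out the junk values of the infima and of their
supremum. -/
lemma le_approxConst_of_eventually (hK : ∃ᶠ α in cofinite, α ∈ Z ∧ qiHeight α * |y - α| ≤ K)
    (hL : ∀ᶠ α in cofinite, α ∈ Z → L ≤ qiHeight α * |y - α|) : L ≤ approxConst Z y := by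
  set F := (eventually_cofinite.1 hL).toFinset
  obtain ⟨α, ⟨hα, -⟩, hF⟩ := (hK.and_eventually F.eventually_cofinite_notMem).exists
  have : Nonempty {α : ℝ // α ∈ Z ∧ α ∉ F} := ⟨α, hα, hF⟩
  have hLF : L ≤ ⨅ α : {α : ℝ // α ∈ Z ∧ α ∉ F}, qiHeight α.1 * |y - α.1| := by
    refine le_ciInf fun ⟨α, hα, hF⟩ ↦ ?_
    by_contra hlt
    exact hF ((Set.Finite.mem_toFinset _).2 fun h ↦ hlt (h hα))
  exact le_ciSup_of_le
    ⟨K, Set.forall_mem_range.2 (iInf_qiHeight_mul_abs_sub_le_of_frequently hK)⟩ F hLF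

end ApproxConst

section MetallicPairing

variable {N : ℕ} {a b c : ℤ}

/-- Up to sign, the polar form of the discriminant, evaluated at the binary quadratic forms
`a X² + b XY + c Y²` and `X² - N XY - Y²`; the roots of the latter are the `N`-th metallic mean and
its conjugate. -/
def metallicPairing (N : ℕ) (a b c : ℤ) : ℤ := 2 * (c - a) + b * N

lemma metallicPairing_swap (N : ℕ) (a b c : ℤ) :
    metallicPairing N c (-b) a = -metallicPairing N a b c := by
  unfold metallicPairing
  ring

lemma metallicPairing_neg_swap (N : ℕ) (a b c : ℤ) :
    metallicPairing N (-c) b (-a) = metallicPairing N a b c := by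
  unfold metallicPairing
  ring

lemma metallicPairing_shift (N : ℕ) (a b c : ℤ) :
    metallicPairing N c (b - 2 * N * c) (a - b * N + c * N ^ 2) = -metallicPairing N a b c := by
  unfold metallicPairing
  ring

lemma mul_lt_of_metallicPairing_lt (hD : discrim a b c = 5) (ha : 0 < a) (hb : 0 < b) (hc : 0 < c)
    (hN : 0 < N) (hlt : metallicPairing N a b c < 3 * N) : c * N < b := by
  rw [discrim, mul_assoc] at hD
  unfold metallicPairing at hlt
  have hac : 0 < a * c := mul_pos ha hc
  have hb3 : 3 ≤ b := by nlinarith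
  rcases hb3.eq_or_lt with rfl | hb3
  · have hac1 : a * c = 1 := by linarith
    have ha1 : a = 1 := by nlinarith
    have hc1 : c = 1 := by nlinarith
    subst ha1 hc1
    linarith
  have hb5 : 5 ≤ b := by
    by_contra! hb5
    obtain rfl : b = 4 := by omega
    omega
  by_contra! hle
  have hN' : (0 : ℤ) < N := by exact_mod_cast hN
  have hdiff : (b - 3) * N < 2 * (a - c) := by linarith
  have hprod : b * (b - 3) ≤ c * (2 * (a - c)) := by
    refine le_of_mul_le_mul_right ?_ hN'
    calc b * (b - 3) * N = b * ((b - 3) * N) := by ring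
      _ ≤ c * N * (2 * (a - c)) :=
        mul_le_mul hle hdiff.le (mul_nonneg (by linarith) hN'.le) (by positivity)
      _ = c * (2 * (a - c)) * N := by ring
  nlinarith [mul_nonneg (by linarith : 0 ≤ b - 1) (sub_nonneg.2 hb5)]

/-- The form `X² - N XY - Y²` is preserved up to sign by the substitutions behind
`metallicPairing_swap`, `metallicPairing_neg_swap` and `metallicPairing_shift`; the first two
reduce to positive coefficients, for which the last one lowers `|b|`. -/
lemma exists_natAbs_lt_of_metallicPairing_lt (hD : discrim a b c = 5) (hac : 0 < a * c)
    (hN : 0 < N) (hlt : |metallicPairing N a b c| < 3 * N) :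
    ∃ a' b' c', discrim a' b' c' = 5 ∧ b'.natAbs < b.natAbs ∧
      |metallicPairing N a' b' c'| = |metallicPairing N a b c| := by
  wlog hb : 0 < b generalizing a b c
  · have hb0 : b ≠ 0 := by
      rintro rfl
      unfold discrim at hD
      linarith
    have hswap := this (a := c) (b := -b) (c := a) (by rw [← hD]; unfold discrim; ring)
      (by rwa [mul_comm]) (by rwa [metallicPairing_swap, abs_neg]) (by omega)
    rwa [metallicPairing_swap, abs_neg, Int.natAbs_neg] at hswap
  wlog ha : 0 < a generalizing a c
  · have hc : c < 0 := neg_of_mul_pos_right hac (not_lt.1 ha)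
    have hswap := this (a := -c) (c := -a) (by rw [← hD]; unfold discrim; ring)
      (by rwa [neg_mul_neg, mul_comm]) (by rwa [metallicPairing_neg_swap]) (by omega)
    rwa [metallicPairing_neg_swap] at hswap
  have hc : 0 < c := pos_of_mul_pos_right hac ha.le
  have hcN := mul_lt_of_metallicPairing_lt hD ha hb hc hN (abs_lt.1 hlt).2
  have hcN0 : 0 < c * N := by positivity
  refine ⟨c, b - 2 * N * c, a - b * N + c * N ^ 2, by rw [← hD]; unfold discrim; ring, ?_,
    by rw [metallicPairing_shift, abs_neg]⟩
  rw [mul_assoc, mul_comm (N : ℤ)]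
  omega

lemma abs_metallicPairing_le_of_mul_nonpos (hD : discrim a b c = 5) (hac : a * c ≤ 0) :
    |metallicPairing N a b c| ≤ N + 4 := by
  unfold discrim at hD
  have hac1 : a * c = -1 := by
    have hge : -1 ≤ a * c := by nlinarith [sq_nonneg b]
    have hne : a * c ≠ 0 := fun h ↦ not_isSquare_five ⟨b, by linarith⟩
    omega
  have hb : b ^ 2 = 1 := by linarith
  unfold metallicPairing
  rcases sq_eq_one_iff.1 hb with rfl | rfl <;>
  rcases Int.mul_eq_neg_one_iff_eq_one_or_neg_one.1 hac1 with ⟨rfl, rfl⟩ | ⟨rfl, rfl⟩ <;>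
  exact abs_le.2 (by constructor <;> linarith)

lemma metallicPairing_gap (hD : discrim a b c = 5) :
    |metallicPairing N a b c| ≤ N + 4 ∨ 3 * N ≤ |metallicPairing N a b c| := by
  induction hn : b.natAbs using Nat.strong_induction_on generalizing a b c with
  | _ n ih =>
  rcases le_or_gt (a * c) 0 with hac | hac
  · exact .inl (abs_metallicPairing_le_of_mul_nonpos hD hac)
  rcases N.eq_zero_or_pos with rfl | hN
  · exact .inr (by simp)
  by_contra! hcon
  obtain ⟨a', b', c', hD', hlt, heq⟩ := exists_natAbs_lt_of_metallicPairing_lt hD hac hN hcon.2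
  have hgap := ih _ (hn ▸ hlt) hD' rfl
  rw [heq] at hgap
  omega

end MetallicPairing

section MetallicMean

/-- The `N`-th metallic mean, i.e. the number with continued fraction expansion `[N; N, N, …]`. -/
noncomputable def metallicMean (N : ℕ) : ℝ := (N + √(N ^ 2 + 4)) / 2

variable {N : ℕ}

lemma two_mul_metallicMean_sub (N : ℕ) : 2 * metallicMean N - N = √(N ^ 2 + 4) := by
  unfold metallicMean
  ring

lemma metallicMean_sq (N : ℕ) : metallicMean N ^ 2 = N * metallicMean N + 1 := by
  have h : √((N : ℝ) ^ 2 + 4) ^ 2 = N ^ 2 + 4 := Real.sq_sqrt (by positivity)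
  unfold metallicMean
  linear_combination h / 4

lemma isRootPair_metallicMean (N : ℕ) :
    IsRootPair 1 (-N) (-1) (metallicMean N) (N - metallicMean N) where
  add := by push_cast; ring
  mul := by push_cast; linear_combination -metallicMean_sq N

lemma discrim_metallicMean (N : ℕ) : discrim (1 : ℤ) (-N) (-1) = N ^ 2 + 4 := by
  unfold discrim
  ring

lemma not_isSquare_discrim_metallicMean (hN : 0 < N) :
    ¬IsSquare (discrim (1 : ℤ) (-N) (-1)) := by
  rw [discrim_metallicMean]
  norm_cast
  rintro ⟨r, hr⟩
  have hlt : N < r := by nlinarith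
  have hgt : r < N + 2 := by nlinarith
  obtain rfl : r = N + 1 := by omega
  ring_nf at hr
  omega

lemma irrational_metallicMean (hN : 0 < N) : Irrational (metallicMean N) :=
  (isRootPair_metallicMean N).irrational (not_isSquare_discrim_metallicMean hN)

lemma exists_isRootPair_of_mem_mobOrbit_goldenRat {α : ℝ} (hα : α ∈ mobOrbit goldenRat) :
    ∃ a b c σ, discrim a b c = 5 ∧ IsRootPair a b c α σ := by
  obtain ⟨A, rfl⟩ := hα
  obtain ⟨a, b, c, hD, h⟩ := (isRootPair_goldenRatio 0).exists_mob A
    (mobDenom_ne_zero A (by simpa using Real.goldenRatio_irrational))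
    (mobDenom_ne_zero A (by simpa using Real.goldenConj_irrational))
  rw [discrim_goldenPair, Int.cast_zero, add_zero] at *
  exact ⟨a, b, c, _, hD, h⟩

lemma metallicMean_notMem_mobOrbit (hN : 2 ≤ N) : metallicMean N ∉ mobOrbit goldenRat := by
  intro hmem
  obtain ⟨a, b, c, σ, hD, h⟩ := exists_isRootPair_of_mem_mobOrbit_goldenRat hmem
  have heq := h.sq_mul_discrim_eq (hD ▸ not_isSquare_five) (isRootPair_metallicMean N)
    (not_isSquare_discrim_metallicMean (by omega))
  rw [hD, discrim_metallicMean] at heq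
  rcases eq_or_ne a 0 with rfl | ha
  · norm_num at heq
  · nlinarith [sq_pos_of_ne_zero ha]

lemma two_mul_mul_metallicPairing (N : ℕ) (a b c : ℤ) :
    2 * (a : ℝ) * metallicPairing N a b c = (2 * a * metallicMean N + b) ^ 2
      - (discrim a b c : ℤ) - 2 * a * (√(N ^ 2 + 4) * (2 * a * metallicMean N + b)) := by
  rw [← two_mul_metallicMean_sub]
  unfold metallicPairing discrim
  push_cast
  linear_combination 4 * (a : ℝ) ^ 2 * metallicMean_sq N

lemma abs_abs_metallicPairing_sub_le {a b c : ℤ} (hD : discrim a b c = 5) (ha : 10 ≤ |(a : ℝ)|)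
    (hP : |2 * a * metallicMean N + b| ≤ 5) :
    |(|(metallicPairing N a b c : ℝ)| - √(N ^ 2 + 4) * |2 * a * metallicMean N + b|)| ≤ 1 := by
  have hid := two_mul_mul_metallicPairing N a b c
  rw [hD] at hid
  set P := 2 * a * metallicMean N + b
  set m : ℝ := ((metallicPairing N a b c : ℤ) : ℝ)
  have hsum : 2 * |(a : ℝ)| * |m + √(N ^ 2 + 4) * P| = |P ^ 2 - 5| := by
    rw [← abs_two, ← abs_mul, ← abs_mul]
    congr 1
    push_cast at hid
    linear_combination hid
  have hP5 : |P ^ 2 - 5| ≤ 20 := by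
    rw [← sq_abs, abs_le]
    constructor <;> nlinarith [abs_nonneg P]
  have hsub := abs_abs_sub_abs_le m (-(√(N ^ 2 + 4) * P))
  rw [abs_neg, abs_mul, abs_of_nonneg (Real.sqrt_nonneg _), sub_neg_eq_add] at hsub
  refine hsub.trans ?_
  nlinarith [abs_nonneg (m + √(N ^ 2 + 4) * P)]

lemma abs_le_or_le_abs_of_metallicMean (hN : 2 ≤ N) {a b c : ℤ} (hD : discrim a b c = 5)
    (ha : 10 ≤ |(a : ℝ)|) (hP : |2 * a * metallicMean N + b| ≤ 5) :
    |2 * a * metallicMean N + b| ≤ 1 + 5 / N ∨ 3 - 4 / N ≤ |2 * a * metallicMean N + b| := by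
  have hN2 : (2 : ℝ) ≤ N := by exact_mod_cast hN
  have hN0 : (0 : ℝ) < N := by positivity
  have hclose := abs_le.1 (abs_abs_metallicPairing_sub_le hD ha hP)
  set P := 2 * a * metallicMean N + b
  have hle : √((N : ℝ) ^ 2 + 4) ≤ N + 1 :=
    Real.sqrt_le_iff.2 ⟨by positivity, by nlinarith⟩
  have hge : (N : ℝ) ≤ √((N : ℝ) ^ 2 + 4) := Real.le_sqrt_of_sq_le (by linarith)
  have hleP := mul_le_mul_of_nonneg_right hle (abs_nonneg P)
  have hgeP := mul_le_mul_of_nonneg_right hge (abs_nonneg P)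
  rcases metallicPairing_gap (N := N) hD with hgap | hgap
  · have hgap' : |(metallicPairing N a b c : ℝ)| ≤ N + 4 := by exact_mod_cast hgap
    left
    rw [one_add_div hN0.ne', le_div_iff₀ hN0]
    linarith
  · have hgap' : 3 * (N : ℝ) ≤ |(metallicPairing N a b c : ℝ)| := by exact_mod_cast hgap
    right
    rw [sub_le_iff_le_add, ← sub_le_iff_le_add', le_div_iff₀ hN0]
    by_contra! hlt
    have : |P| < 3 := lt_of_mul_lt_mul_right (by linarith) hN0.le
    linarith

end MetallicMean

section LowerBound

variable {N : ℕ}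

lemma finite_isRootPair_of_abs_le {D : ℤ} (hD : ¬IsSquare D) (y R S : ℝ) :
    {α | ∃ (a b c : ℤ) (σ : ℝ), discrim a b c = D ∧ IsRootPair a b c α σ ∧ |(a : ℝ)| ≤ R ∧
      |2 * a * y + b| ≤ S}.Finite := by
  have hfin (T : ℝ) : {k : ℤ | |(k : ℝ)| ≤ T}.Finite :=
    (Set.finite_Icc ⌈-T⌉ ⌊T⌋).subset fun k hk ↦
      ⟨Int.ceil_le.2 (abs_le.1 hk).1, Int.le_floor.2 (abs_le.1 hk).2⟩
  refine (((hfin R).prod (hfin (S + 2 * R * |y|))).prod (Set.toFinite {√D, -√D})).image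
    (fun p ↦ (p.2 - p.1.2) / (2 * p.1.1) : (ℤ × ℤ) × ℝ → ℝ) |>.subset ?_
  rintro α ⟨a, b, c, σ, rfl, h, ha, hP⟩
  have ha0 := h.leadingCoeff_ne_zero hD
  refine ⟨((a, b), a * (α - σ)), ⟨⟨ha, ?_⟩, sq_eq_sq_iff_eq_or_eq_neg.1 ?_⟩, ?_⟩
  · calc |(b : ℝ)| = |2 * a * y + b - 2 * a * y| := by rw [add_sub_cancel_left]
      _ ≤ |2 * a * y + b| + |2 * a * y| := abs_sub _ _
      _ ≤ S + 2 * R * |y| := by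
        rw [abs_mul, abs_mul, abs_two]
        gcongr
  · rw [← h.abs_mul_abs_sub, ← abs_mul, sq_abs]
  · simp only
    rw [div_eq_iff (mul_ne_zero two_ne_zero ha0)]
    linear_combination -h.add

lemma IsRootPair.abs_abs_sub_sqrt_div_le {a b c : ℤ} {α σ : ℝ} (h : IsRootPair a b c α σ)
    (hD : ¬IsSquare (discrim a b c)) (y : ℝ) :
    |(|2 * a * y + b| - √(discrim a b c : ℤ))| / √(discrim a b c : ℤ) ≤ qiHeight α * |y - α| := by
  have ha := abs_pos.2 (h.leadingCoeff_ne_zero hD)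
  rw [h.qiHeight_eq hD, ← h.abs_mul_abs_sub]
  have hnum : |2 * a * y + b - a * (α - σ)| = 2 * |(a : ℝ)| * |y - α| := by
    rw [← abs_two, ← abs_mul, ← abs_mul]
    congr 1
    linear_combination h.add
  calc |(|2 * a * y + b| - |(a : ℝ)| * |α - σ|)| / (|(a : ℝ)| * |α - σ|)
      ≤ 2 * |(a : ℝ)| * |y - α| / (|(a : ℝ)| * |α - σ|) := by
        rw [← hnum, ← abs_mul]
        exact div_le_div_of_nonneg_right (abs_abs_sub_abs_le _ _) (abs_nonneg _)
    _ = 2 / |α - σ| * |y - α| := by field_simp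

lemma le_abs_sub_sqrt_five_div (hN : 0 < N) {P : ℝ} (h : P ≤ 1 + 5 / N ∨ 3 - 4 / N ≤ P) :
    3 / √5 - 1 - 4 / N ≤ |P - √5| / √5 := by
  have hsqrt : 2 < √5 := Real.lt_sqrt_of_sq_lt (by norm_num)
  have hinv : 0 < 1 / (N : ℝ) := by positivity
  have hexpand : (3 / √5 - 1 - 4 / N) * √5 = 3 - √5 - 4 * √5 * (1 / N) := by field_simp
  rw [le_div_iff₀ (by positivity), hexpand]
  rcases h with h | h
  · refine le_trans ?_ (neg_le_abs _)
    have : 5 / (N : ℝ) = 5 * (1 / N) := by ring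
    nlinarith
  · refine le_trans ?_ (le_abs_self _)
    have : 4 / (N : ℝ) = 4 * (1 / N) := by ring
    nlinarith

lemma eventually_le_qiHeight_mul_abs_metallicMean_sub (hN : 2 ≤ N) :
    ∀ᶠ α in cofinite, α ∈ mobOrbit goldenRat →
      3 / √5 - 1 - 4 / N ≤ qiHeight α * |metallicMean N - α| := by
  filter_upwards [(finite_isRootPair_of_abs_le not_isSquare_five
    (metallicMean N) 10 5).eventually_cofinite_notMem] with α hα hmem
  obtain ⟨a, b, c, σ, hD, h⟩ := exists_isRootPair_of_mem_mobOrbit_goldenRat hmem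
  have hgap : |2 * a * metallicMean N + b| ≤ 1 + 5 / N ∨
      3 - 4 / N ≤ |2 * a * metallicMean N + b| := by
    rcases le_total (|2 * a * metallicMean N + b|) 5 with hP | hP
    · have ha : 10 ≤ |(a : ℝ)| := le_of_not_ge fun ha ↦ hα ⟨a, b, c, σ, hD, h, ha, hP⟩
      exact abs_le_or_le_abs_of_metallicMean hN hD ha hP
    · have : 0 ≤ 4 / (N : ℝ) := by positivity
      exact .inr (by linarith)
  have hle := h.abs_abs_sub_sqrt_div_le (hD ▸ not_isSquare_five) (metallicMean N)
  rw [hD, Int.cast_ofNat] at hle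
  exact (le_abs_sub_sqrt_five_div (by omega) hgap).trans hle

lemma le_approxConst_metallicMean (hN : 2 ≤ N) :
    3 / √5 - 1 - 4 / N ≤ approxConst (mobOrbit goldenRat) (metallicMean N) :=
  le_approxConst_of_eventually (frequently_cofinite_mobOrbit_goldenRat
    (irrational_metallicMean (by omega)) (metallicMean_notMem_mobOrbit hN))
    (eventually_le_qiHeight_mul_abs_metallicMean_sub hN)

end LowerBound

/-- Parkkonen-Paulin: for the approximation of real numbers by the elements of the orbit
`PSL₂(ℤ)·φ` of the Golden Ratio `φ` with height function `H(α) = 2/|α − α^σ|`, the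
Hurwitz constant, i.e. the supremum of the approximation constants `c(y)` over all
`y ∈ ℝ ∖ (ℚ ∪ PSL₂(ℤ)·φ)`, equals `3/√5 − 1`. -/
theorem hurwitzConstant_goldenRatio :
    sSup (lagrangeSpectrum (mobOrbit goldenRat)) = 3 / Real.sqrt 5 - 1 := by
  have hle : ∀ c ∈ lagrangeSpectrum (mobOrbit goldenRat), c ≤ 3 / √5 - 1 := by
    rintro _ ⟨y, ⟨hy, hyφ⟩, rfl⟩
    exact approxConst_le_of_frequently (frequently_cofinite_mobOrbit_goldenRat hy hyφ)
  have hmem {N : ℕ} (hN : 2 ≤ N) :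
      approxConst (mobOrbit goldenRat) (metallicMean N) ∈ lagrangeSpectrum (mobOrbit goldenRat) :=
    ⟨_, ⟨irrational_metallicMean (by omega), metallicMean_notMem_mobOrbit hN⟩, rfl⟩
  have hlim : Tendsto (fun N : ℕ ↦ 3 / √5 - 1 - 4 / (N : ℝ)) atTop (𝓝 (3 / √5 - 1)) := by
    simpa using tendsto_const_nhds.sub (tendsto_const_div_atTop_nhds_zero_nat (4 : ℝ))
  refine le_antisymm (csSup_le ⟨_, hmem le_rfl⟩ hle) (le_of_tendsto hlim ?_)
  filter_upwards [eventually_ge_atTop 2] with N hN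
  exact (le_approxConst_metallicMean hN).trans (le_csSup ⟨_, hle⟩ (hmem hN))
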